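/- Let 1 ≤ p < ∞, let (X,d,μ) satisfy the standing assumptions, be of uniformly locally p-controlled geometry, and support a global (p,p)-Sobolev inequality for compactly supported functions. Let f ∈ D^{1,p}(X) and suppose there exists c ∈ ℝ such that Mod_p(Γ) = 0, where Γ is the family of all 1-Lipschitz maps γ : [0,∞) → X tending to ∞ for which f(γ(t)) does not converge to c as t → ∞. Then ∫_X |f − c|^p dμ < ∞, i.e., f − c ∈ N^{1,p}(X). -/

import Mathlib

/-!
The idea is to approximate `|f - c|` from below by compactly supported functions that share one
`p`-integrable upper gradient `ρ`, and to apply the Sobolev inequality to them.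

Since the family of bad rays has modulus zero, `exists_density` provides a lower semicontinuous
`ρ ∈ L^p` that dominates the given upper gradient of `f`, is bounded below by positive constants on
balls, and has infinite integral along every bad ray. Let `v_n(x)` (`exitCost`) be the infimum of
`∫_γ ρ` over curves `γ` from `x` to the complement of `B(x₀, n)`. It vanishes off `B(x₀, n)`, is
lower semicontinuous (`lowerSemicontinuous_exitCost`), and changes along a curve by at most the
integral of `ρ` (`exitCost_le_lintegral_add`). Hence `w_n = min(|f - c|, v_n, n)` is Borel, bounded,
compactly supported and has `ρ` as an upper gradient, so `∫ w_n^p ≤ C ∫ ρ^p` for all `n`.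

It remains to see that `lim v_n ≥ |f - c|`, for then Fatou's lemma concludes. If `v_n(x) < M` for
infinitely many `n`, Arzelà–Ascoli yields a limit ray from `x` whose `ρ`-integral is at most `M`.
The lower bound of `ρ` on balls makes this ray tend to infinity, and its finite `ρ`-integral makes
it a good ray, so that `f` tends to `c` along it and `|f(x) - c| ≤ ∫ ρ ≤ M`
(`ofReal_abs_sub_le_of_frequently_exitCost_lt`).
-/


open MeasureTheory Metric Set Filter
open scoped ENNReal NNReal Topology

/-- `g` is an upper gradient of `u`: for every `L ≥ 0` and every `1`-Lipschitz curve
`γ : [0,L] → X`, one has `|u(γ L) - u(γ 0)| ≤ ∫₀^L g(γ t) dt`. -/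
def IsUpperGradient {X : Type*} [MetricSpace X] (g : X → ℝ≥0∞) (u : X → ℝ) : Prop :=
  ∀ (L : ℝ) (γ : ℝ → X), 0 ≤ L → LipschitzOnWith 1 γ (Set.Icc 0 L) →
    ENNReal.ofReal |u (γ L) - u (γ 0)| ≤ ∫⁻ t in Set.Icc 0 L, g (γ t)

/-- `(X,d,μ)` is of uniformly locally `p`-controlled geometry: there are `R₀ ∈ (0,∞]`,
`C_d ≥ 1`, `C, λ > 0` such that the measure is doubling and a `p`-Poincaré inequality holds
at all scales `0 < r < R₀`. -/
def UniformlyLocallyControlledGeometry {X : Type*} [MetricSpace X] [MeasurableSpace X]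
    (p : ℝ) (μ : Measure X) : Prop :=
  ∃ (R₀ : ℝ≥0∞) (Cd C lam : ℝ), 0 < R₀ ∧ 1 ≤ Cd ∧ 0 < C ∧ 0 < lam ∧
    (∀ (x : X) (r : ℝ), 0 < r → ENNReal.ofReal r < R₀ →
      μ (ball x (2 * r)) ≤ ENNReal.ofReal Cd * μ (ball x r)) ∧
    (∀ (u : X → ℝ) (g : X → ℝ≥0∞), LocallyIntegrable u μ → Measurable g →
      IsUpperGradient g u → ∀ (x : X) (r : ℝ), 0 < r → ENNReal.ofReal r < R₀ →
      ENNReal.ofReal (⨍ y in ball x r, |u y - ⨍ z in ball x r, u z ∂μ| ∂μ) ≤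
        ENNReal.ofReal (C * r) *
          ((∫⁻ y in ball x (lam * r), g y ^ p ∂μ) / μ (ball x (lam * r))) ^ (1 / p))

/-- `X` supports a global `(p,p)`-Sobolev inequality for compactly supported functions. -/
def GlobalSobolevInequality {X : Type*} [MetricSpace X] [MeasurableSpace X]
    (p : ℝ) (μ : Measure X) : Prop :=
  ∃ Cs : ℝ, 0 < Cs ∧ ∀ (u : X → ℝ) (g : X → ℝ≥0∞), Measurable u → HasCompactSupport u →
    (∫⁻ x, ENNReal.ofReal |u x| ^ p ∂μ) < ⊤ → Measurable g → IsUpperGradient g u →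
    (∫⁻ x, ENNReal.ofReal |u x| ^ p ∂μ) ≤ ENNReal.ofReal Cs * ∫⁻ x, g x ^ p ∂μ

/-- A ray `γ : [0,∞) → X` tends to `∞` if it eventually leaves every ball around `γ 0`. -/
def TendsToInfinity {X : Type*} [MetricSpace X] (γ : ℝ → X) : Prop :=
  ∀ R : ℝ, 0 < R → ∃ T : ℝ, 0 < T ∧ ∀ t : ℝ, T < t → R ≤ dist (γ 0) (γ t)

/-- The `p`-modulus of a family `Γ` of maps `γ : [0,∞) → X`: the infimum of `∫ hᵖ dμ` over all
Borel `h : X → [0,∞]` with `∫_{[0,∞)} h(γ(t)) dt ≥ 1` for every `γ ∈ Γ`. -/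
noncomputable def RayModulus {X : Type*} [MeasurableSpace X] (p : ℝ) (μ : Measure X)
    (Γ : Set (ℝ → X)) : ℝ≥0∞ :=
  ⨅ (h : X → ℝ≥0∞) (_ : Measurable h)
    (_ : ∀ γ ∈ Γ, 1 ≤ ∫⁻ t in Set.Ici (0 : ℝ), h (γ t)), ∫⁻ x, h x ^ p ∂μ


/-! ### Limits of `1`-Lipschitz curves -/

/-- Arzelà–Ascoli for curves: `1`-Lipschitz curves with bounded starting points subconverge
pointwise to a `1`-Lipschitz curve. -/
lemma exists_subseq_curve {X : Type*} [MetricSpace X] [ProperSpace X] (x₀ : X) (R : ℝ)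
    (γ : ℕ → ℝ → X) (hγ : ∀ n, LipschitzWith 1 (γ n)) (h0 : ∀ n, γ n 0 ∈ closedBall x₀ R) :
    ∃ (φ : ℕ → ℕ) (σ : ℝ → X), StrictMono φ ∧ LipschitzWith 1 σ ∧
      ∀ t, Tendsto (fun n => γ (φ n) t) atTop (𝓝 (σ t)) := by
  let K : Set C(ℝ, X) := {η | LipschitzWith 1 η ∧ η 0 ∈ closedBall x₀ R}
  have himg : ContinuousMap.toFun '' K =
      {η : ℝ → X | LipschitzWith 1 η ∧ η 0 ∈ closedBall x₀ R} := by
    ext η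
    constructor
    · rintro ⟨ζ, hζ, rfl⟩
      exact hζ
    · intro h
      exact ⟨⟨η, h.1.continuous⟩, h, rfl⟩
  have hK : IsCompact K := by
    apply ArzelaAscoli.isCompact_of_equicontinuous
    · rw [himg]
      refine IsCompact.of_isClosed_subset
        (isCompact_univ_pi fun t : ℝ => isCompact_closedBall x₀ (R + |t|)) ?_ ?_
      · have hB : IsClosed {η : ℝ → X | η 0 ∈ closedBall x₀ R} :=
          isClosed_closedBall.preimage (continuous_apply 0)
        refine IsClosed.inter ?_ hB
        have : {η : ℝ → X | LipschitzWith 1 η} =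
            ⋂ (s : ℝ) (t : ℝ), {η : ℝ → X | dist (η s) (η t) ≤ dist s t} := by
          ext η
          simp [lipschitzWith_iff_dist_le_mul]
        change IsClosed {η : ℝ → X | LipschitzWith 1 η}
        rw [this]
        exact isClosed_iInter fun s => isClosed_iInter fun t =>
          isClosed_le ((continuous_apply s).dist (continuous_apply t)) continuous_const
      · rintro η ⟨h1, h2⟩ t -
        have h3 := h1.dist_le_mul t 0
        rw [mem_closedBall] at h2 ⊢
        have := dist_triangle (η t) (η 0) x₀
        simp at h3
        linarith
    · have : UniformEquicontinuous ((↑) : K → ℝ → X) :=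
        LipschitzWith.uniformEquicontinuous _ 1 fun η => η.2.1
      exact this.equicontinuous
  obtain ⟨η, hη, φ, hφ, hlim⟩ := hK.tendsto_subseq
    (x := fun n => (⟨γ n, (hγ n).continuous⟩ : C(ℝ, X))) fun n => ⟨hγ n, h0 n⟩
  refine ⟨φ, η, hφ, hη.1, fun t => ?_⟩
  exact ((continuous_eval_const (F := C(ℝ, X)) t).tendsto η).comp hlim

/-- Lower semicontinuity of the line integral of a lower semicontinuous density under pointwise
convergence of curves. The domains of integration may vary, as long as every point of the limit
domain `S` eventually lies in `T n`. -/
lemma lintegral_curve_le {X : Type*} [MetricSpace X] [MeasurableSpace X] [BorelSpace X]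
    {ρ : X → ℝ≥0∞} (hρ : LowerSemicontinuous ρ) {γ : ℕ → ℝ → X} {σ : ℝ → X}
    (hγ : ∀ n, Continuous (γ n)) (hlim : ∀ t, Tendsto (fun n => γ n t) atTop (𝓝 (σ t)))
    {S : Set ℝ} {T : ℕ → Set ℝ} (hS : MeasurableSet S) (hT : ∀ n, MeasurableSet (T n))
    (hST : ∀ t ∈ S, ∀ᶠ n in atTop, t ∈ T n) {M : ℝ≥0∞}
    (hM : ∀ n, ∫⁻ t in T n, ρ (γ n t) ≤ M) :
    ∫⁻ t in S, ρ (σ t) ≤ M := by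
  calc ∫⁻ t in S, ρ (σ t) = ∫⁻ t, S.indicator (fun t => ρ (σ t)) t :=
        (lintegral_indicator hS _).symm
    _ ≤ ∫⁻ t, liminf (fun n => (T n).indicator (fun t => ρ (γ n t)) t) atTop := by
        refine lintegral_mono fun t => ?_
        by_cases ht : t ∈ S
        · rw [indicator_of_mem ht]
          refine le_of_forall_lt_imp_le_of_dense fun a ha => ?_
          refine le_liminf_of_le (by isBoundedDefault) ?_
          filter_upwards [hST t ht, (hlim t).eventually (hρ (σ t) a ha)] with n h1 h2
          rw [indicator_of_mem h1]
          exact h2.le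
        · rw [indicator_of_notMem ht]
          exact zero_le
    _ ≤ liminf (fun n => ∫⁻ t, (T n).indicator (fun t => ρ (γ n t)) t) atTop :=
        lintegral_liminf_le fun n =>
          (hρ.measurable.comp (hγ n).measurable).indicator (hT n)
    _ ≤ M := by
        refine liminf_le_of_le (by isBoundedDefault) fun b hb => ?_
        obtain ⟨n, hn⟩ := hb.exists
        refine hn.trans ?_
        rw [lintegral_indicator (hT n)]
        exact hM n

/-- A `1`-Lipschitz ray that returns to a fixed ball at arbitrarily late times spends infinite
time in a slightly larger ball; so finiteness of the line integral of a density that is bounded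
below on balls forces the ray to infinity. -/
lemma tendsToInfinity_of_lintegral_lt_top {X : Type*} [MetricSpace X] [MeasurableSpace X]
    [BorelSpace X] {ρ : X → ℝ≥0∞} (hρ : Measurable ρ)
    {σ : ℝ → X} (hσ : LipschitzWith 1 σ)
    (hpos : ∀ R : ℝ, ∃ b : ℝ≥0∞, b ≠ 0 ∧ ∀ y ∈ ball (σ 0) R, b ≤ ρ y)
    (hfin : ∫⁻ t in Ici 0, ρ (σ t) < ⊤) : TendsToInfinity σ := by
  intro R hR
  obtain ⟨b, hb0, hb⟩ := hpos (R + 2)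
  -- the tails of the line integral tend to zero
  let ν : Measure ℝ := (volume.restrict (Ici 0)).withDensity fun t => ρ (σ t)
  have hν : IsFiniteMeasure ν := isFiniteMeasure_withDensity hfin.ne
  have htail : Tendsto (fun n : ℕ => ν (Ici (n : ℝ))) atTop (𝓝 (ν (⋂ n : ℕ, Ici (n : ℝ)))) := by
    refine tendsto_measure_iInter_atTop (fun n => measurableSet_Ici.nullMeasurableSet) ?_
      ⟨0, measure_ne_top ν _⟩
    intro m n hmn
    exact Ici_subset_Ici.2 (by exact_mod_cast hmn)
  have hempty : (⋂ n : ℕ, Ici (n : ℝ)) = ∅ := by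
    ext t
    simp only [mem_iInter, mem_Ici, mem_empty_iff_false, iff_false, not_forall, not_le]
    exact exists_nat_gt t
  rw [hempty, measure_empty] at htail
  obtain ⟨n, hn, hn1⟩ := ((htail.eventually_lt_const (pos_iff_ne_zero.2 hb0)).and
    (eventually_ge_atTop 1)).exists
  refine ⟨n, by exact_mod_cast hn1, fun t ht => ?_⟩
  by_contra! hlt
  have hn0 : (0 : ℝ) ≤ n := n.cast_nonneg
  have hsub : Icc t (t + 1) ⊆ Ici (n : ℝ) := fun s hs => ht.le.trans hs.1
  -- after a visit to the `R`-ball at time `t`, the ray stays in the `(R + 2)`-ball for unit time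
  have : b ≤ ν (Icc t (t + 1)) := by
    rw [withDensity_apply _ measurableSet_Icc,
      Measure.restrict_restrict measurableSet_Icc,
      inter_eq_left.2 (hsub.trans (Ici_subset_Ici.2 hn0))]
    calc b = ∫⁻ s in Icc t (t + 1), b := by simp
      _ ≤ _ := by
        refine setLIntegral_mono (hρ.comp hσ.continuous.measurable) fun s hs => hb _ ?_
        rw [mem_ball]
        have h1 := hσ.dist_le_mul s t
        have h2 : dist s t ≤ 1 := by
          rw [Real.dist_eq, abs_of_nonneg (by linarith [hs.1])]
          linarith [hs.2]
        have h3 := dist_triangle (σ s) (σ t) (σ 0)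
        rw [dist_comm (σ t)] at h3
        simp at h1
        linarith
  exact absurd (this.trans (measure_mono hsub)) (not_le.2 hn)

/-! ### The cost of leaving a ball -/

/-- The least `ρ`-length of a curve that starts at `x` and ends outside `ball x₀ R`. Curves are
globally defined `1`-Lipschitz maps `ℝ → X`, of which only the restriction to `[0, L]` matters;
the value is `⊤` if no curve from `x` reaches the complement of the ball. -/
noncomputable def exitCost {X : Type*} [MetricSpace X] (ρ : X → ℝ≥0∞) (x₀ : X) (R : ℝ) (x : X) :
    ℝ≥0∞ :=
  ⨅ (L : ℝ) (γ : ℝ → X) (_ : 0 ≤ L) (_ : LipschitzWith 1 γ) (_ : γ 0 = x)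
    (_ : γ L ∉ ball x₀ R), ∫⁻ t in Icc 0 L, ρ (γ t)

lemma exitCost_lt_iff {X : Type*} [MetricSpace X] {ρ : X → ℝ≥0∞} {x₀ : X} {R : ℝ} {x : X}
    {M : ℝ≥0∞} : exitCost ρ x₀ R x < M ↔ ∃ (L : ℝ) (γ : ℝ → X), 0 ≤ L ∧ LipschitzWith 1 γ ∧
      γ 0 = x ∧ γ L ∉ ball x₀ R ∧ ∫⁻ t in Icc 0 L, ρ (γ t) < M := by
  simp only [exitCost, iInf_lt_iff, exists_prop]

lemma exitCost_le {X : Type*} [MetricSpace X] {ρ : X → ℝ≥0∞} {x₀ : X} {R : ℝ}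
    {L : ℝ} {γ : ℝ → X} (hL : 0 ≤ L) (hγ : LipschitzWith 1 γ) (hout : γ L ∉ ball x₀ R) :
    exitCost ρ x₀ R (γ 0) ≤ ∫⁻ t in Icc 0 L, ρ (γ t) :=
  iInf_le_of_le L <| iInf_le_of_le γ <| iInf_le_of_le hL <| iInf_le_of_le hγ <|
    iInf_le_of_le rfl <| iInf_le_of_le hout le_rfl

lemma exitCost_eq_zero {X : Type*} [MetricSpace X] {ρ : X → ℝ≥0∞} {x₀ : X} {R : ℝ} {x : X}
    (hx : x ∉ ball x₀ R) : exitCost ρ x₀ R x = 0 := by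
  have := exitCost_le (ρ := ρ) (γ := fun _ : ℝ => x) le_rfl (LipschitzWith.const' x) hx
  simpa using this

/-- Stopping a curve at its first exit from the ball bounds the length of the part needed in
terms of its `ρ`-length, if `ρ` is bounded below on the ball. -/
lemma exists_first_exit {X : Type*} [MetricSpace X] [MeasurableSpace X] [BorelSpace X]
    {ρ : X → ℝ≥0∞} (hρ : Measurable ρ) {x₀ : X} {R : ℝ}
    {b : ℝ≥0∞} (hb : ∀ y ∈ ball x₀ R, b ≤ ρ y)
    {L : ℝ} {γ : ℝ → X} (hL : 0 ≤ L) (hγ : LipschitzWith 1 γ) (hout : γ L ∉ ball x₀ R) :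
    ∃ τ, 0 ≤ τ ∧ τ ≤ L ∧ γ τ ∉ ball x₀ R ∧
      b * ENNReal.ofReal τ ≤ ∫⁻ t in Icc 0 L, ρ (γ t) := by
  have hcomp : IsCompact (Icc 0 L ∩ γ ⁻¹' (ball x₀ R)ᶜ) :=
    isCompact_Icc.inter_right (isOpen_ball.isClosed_compl.preimage hγ.continuous)
  obtain ⟨τ, ⟨hτ, hτout⟩, hmin⟩ := hcomp.exists_isLeast ⟨L, right_mem_Icc.2 hL, hout⟩
  refine ⟨τ, hτ.1, hτ.2, hτout, ?_⟩
  calc b * ENNReal.ofReal τ = ∫⁻ _ in Ico 0 τ, b := by simp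
    _ ≤ ∫⁻ t in Ico 0 τ, ρ (γ t) := by
      refine setLIntegral_mono (hρ.comp hγ.continuous.measurable) fun t ht => hb _ ?_
      by_contra hmem
      have hmem' : t ∈ Icc 0 L ∩ γ ⁻¹' (ball x₀ R)ᶜ := ⟨⟨ht.1, ht.2.le.trans hτ.2⟩, hmem⟩
      exact absurd (hmin hmem') (not_le.2 ht.2)
    _ ≤ _ := lintegral_mono_set (Ico_subset_Icc_self.trans (Icc_subset_Icc_right hτ.2))

/-- Lower semicontinuity of the exit cost, by compactness: almost optimal curves stopped at their
first exit have bounded length, so they subconverge. This gives Borel measurability. -/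
lemma lowerSemicontinuous_exitCost {X : Type*} [MetricSpace X] [ProperSpace X]
    [MeasurableSpace X] [BorelSpace X]
    {ρ : X → ℝ≥0∞} (hρ : LowerSemicontinuous ρ) {x₀ : X} {R : ℝ}
    {b : ℝ≥0∞} (hb0 : b ≠ 0) (hb : ∀ y ∈ ball x₀ R, b ≤ ρ y) :
    LowerSemicontinuous (exitCost ρ x₀ R) := by
  intro x M hM
  obtain ⟨M', hM', hM'x⟩ := exists_between hM
  by_contra hcon
  obtain ⟨y, hy, hyM⟩ := exists_seq_forall_of_frequently (not_eventually.1 hcon)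
  have hball : ∀ᶠ n in atTop, y n ∈ closedBall x 1 :=
    hy.eventually (closedBall_mem_nhds x one_pos)
  obtain ⟨N, hN⟩ := eventually_atTop.1 hball
  have key : ∀ n, ∃ (τ : ℝ) (γ : ℝ → X), τ ∈ Icc 0 (M' / b).toReal ∧ LipschitzWith 1 γ ∧
      γ 0 = y (n + N) ∧ γ τ ∉ ball x₀ R ∧ ∫⁻ t in Icc 0 τ, ρ (γ t) ≤ M' := by
    intro n
    obtain ⟨L, γ, hL, hγ, h0, hout, hlt⟩ :=
      exitCost_lt_iff.1 ((not_lt.1 (hyM (n + N))).trans_lt hM')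
    obtain ⟨τ, hτ0, hτL, hτout, hτ⟩ := exists_first_exit hρ.measurable hb hL hγ hout
    refine ⟨τ, γ, ⟨hτ0, ?_⟩, hγ, h0, hτout,
      (lintegral_mono_set (Icc_subset_Icc_right hτL)).trans hlt.le⟩
    have h1 : ENNReal.ofReal τ ≤ M' / b := by
      rw [ENNReal.le_div_iff_mul_le (Or.inl hb0) (Or.inr hM'x.ne_top), mul_comm]
      exact hτ.trans hlt.le
    exact (ENNReal.ofReal_le_iff_le_toReal (ENNReal.div_lt_top hM'x.ne_top hb0).ne).1 h1
  choose τ γ hτ hγ h0 hout hcost using key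
  obtain ⟨φ, σ, hφ, hσ, hlim⟩ := exists_subseq_curve x 1 γ hγ
    fun n => by rw [h0]; exact hN _ (Nat.le_add_left _ _)
  obtain ⟨L, hL, ψ, hψ, hτlim⟩ := isCompact_Icc.tendsto_subseq (x := τ ∘ φ) fun n => hτ (φ n)
  have hlim' : ∀ t, Tendsto (fun n => γ (φ (ψ n)) t) atTop (𝓝 (σ t)) := fun t =>
    (hlim t).comp hψ.tendsto_atTop
  have hσ0 : σ 0 = x := by
    refine tendsto_nhds_unique (hlim' 0) ?_
    simp only [h0]
    exact hy.comp (tendsto_atTop_mono (fun n => Nat.le_add_right _ N) (hφ.comp hψ).tendsto_atTop)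
  have hend : Tendsto (fun n => γ (φ (ψ n)) (τ (φ (ψ n)))) atTop (𝓝 (σ L)) := by
    rw [tendsto_iff_dist_tendsto_zero]
    have h1 := (tendsto_iff_dist_tendsto_zero.1 hτlim).add
      (tendsto_iff_dist_tendsto_zero.1 (hlim' L))
    rw [add_zero] at h1
    refine squeeze_zero (fun _ => dist_nonneg) (fun n => ?_) h1
    refine (dist_triangle _ (γ (φ (ψ n)) L) _).trans (add_le_add_left ?_ _)
    simpa using (hγ (φ (ψ n))).dist_le_mul (τ (φ (ψ n))) L
  have hσL : σ L ∉ ball x₀ R :=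
    isOpen_ball.isClosed_compl.mem_of_tendsto hend (Eventually.of_forall fun n => hout _)
  -- half-open, since only the times `t < L` are eventually below `τ (φ (ψ n))`
  have hle : ∫⁻ t in Ico 0 L, ρ (σ t) ≤ M' := by
    refine lintegral_curve_le hρ (γ := fun n => γ (φ (ψ n))) (fun n => (hγ _).continuous) hlim'
      (T := fun n => Icc 0 (τ (φ (ψ n)))) measurableSet_Ico (fun _ => measurableSet_Icc) ?_
      fun n => hcost _
    intro t ht
    filter_upwards [hτlim.eventually_const_lt ht.2] with n hn
    exact ⟨ht.1, hn.le⟩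
  have h2 := exitCost_le (ρ := ρ) hL.1 hσ hσL
  rw [hσ0, ← setLIntegral_congr Ico_ae_eq_Icc] at h2
  exact absurd (h2.trans hle) (not_le.2 hM'x)

/-- The exit cost grows along a curve at most at rate `ρ`: prepend the curve to any competitor
for its endpoint. -/
lemma exitCost_le_lintegral_add {X : Type*} [MetricSpace X] [MeasurableSpace X] [BorelSpace X]
    {ρ : X → ℝ≥0∞} (hρ : Measurable ρ) (x₀ : X) (R : ℝ)
    {L : ℝ} {γ : ℝ → X} (hL : 0 ≤ L) (hγ : LipschitzWith 1 γ) :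
    exitCost ρ x₀ R (γ 0) ≤ (∫⁻ t in Icc 0 L, ρ (γ t)) + exitCost ρ x₀ R (γ L) := by
  by_contra! hcon
  obtain ⟨L', η, hL', hη, h0, hout, hlt⟩ := exitCost_lt_iff.1 (lt_tsub_iff_left.2 hcon)
  rw [lt_tsub_iff_left] at hlt
  -- the concatenation of `γ` on `[0, L]` and `η` on `[0, L']`
  let ζ : ℝ → X := fun t => if t ≤ L then γ t else η (t - L)
  have hζ1 : ∀ t ≤ L, ζ t = γ t := fun t ht => if_pos ht
  have hζ2 : ∀ t, L ≤ t → ζ t = η (t - L) := by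
    intro t ht
    rcases ht.eq_or_lt with rfl | ht
    · simp [ζ, h0]
    · exact if_neg (not_le.2 ht)
  have haux : ∀ s t, s ≤ t → dist (ζ s) (ζ t) ≤ t - s := by
    intro s t hst
    have hγ' : ∀ a b, a ≤ b → dist (γ a) (γ b) ≤ b - a := fun a b hab => by
      simpa [Real.dist_eq, abs_sub_comm a b, abs_of_nonneg (sub_nonneg.2 hab)]
        using hγ.dist_le_mul a b
    have hη' : ∀ a b, a ≤ b → dist (η a) (η b) ≤ b - a := fun a b hab => by
      simpa [Real.dist_eq, abs_sub_comm a b, abs_of_nonneg (sub_nonneg.2 hab)]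
        using hη.dist_le_mul a b
    rcases le_total t L with h | h
    · rw [hζ1 s (hst.trans h), hζ1 t h]
      exact hγ' _ _ hst
    rcases le_total s L with h' | h'
    · have h1 := hγ' s L h'
      have h2 := hη' (L - L) (t - L) (by linarith)
      rw [← hζ1 s h', ← hζ1 L le_rfl] at h1
      rw [← hζ2 L le_rfl, ← hζ2 t h] at h2
      linarith [dist_triangle (ζ s) (ζ L) (ζ t)]
    · rw [hζ2 s h', hζ2 t h]
      linarith [hη' (s - L) (t - L) (by linarith)]
  have hζ : LipschitzWith 1 ζ := by
    refine LipschitzWith.of_dist_le_mul fun s t => ?_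
    rcases le_total s t with h | h
    · simpa [Real.dist_eq, abs_sub_comm s t, abs_of_nonneg (sub_nonneg.2 h)] using haux s t h
    · rw [dist_comm (ζ s)]
      simpa [Real.dist_eq, abs_of_nonneg (sub_nonneg.2 h)] using haux t s h
  have hend : ζ (L + L') = η L' := by rw [hζ2 _ (by linarith)]; simp
  have hle := exitCost_le (ρ := ρ) (R := R) (x₀ := x₀) (add_nonneg hL hL') hζ (hend ▸ hout)
  rw [hζ1 0 hL] at hle
  have hsplit : ∫⁻ t in Icc 0 (L + L'), ρ (ζ t) ≤
      (∫⁻ t in Icc 0 L, ρ (γ t)) + ∫⁻ t in Icc 0 L', ρ (η t) := by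
    have hsub : Icc 0 (L + L') ⊆ Icc 0 L ∪ Icc L (L + L') := fun t ht =>
      (le_total t L).imp (fun h => ⟨ht.1, h⟩) fun h => ⟨h, ht.2⟩
    refine (lintegral_mono_set hsub).trans ((lintegral_union_le _ _ _).trans ?_)
    refine add_le_add (setLIntegral_congr_fun measurableSet_Icc
      fun t ht => by simp only [hζ1 t ht.2]).le ?_
    have hshift := (measurePreserving_sub_right volume L).setLIntegral_comp_preimage
      measurableSet_Icc (hρ.comp hη.continuous.measurable) (s := Icc 0 L')
    have hpre : (fun t : ℝ => t - L) ⁻¹' Icc 0 L' = Icc L (L + L') := by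
      simp [add_comm]
    rw [hpre] at hshift
    refine le_of_eq (Eq.trans ?_ hshift)
    exact setLIntegral_congr_fun measurableSet_Icc
      fun t ht => by simp only [hζ2 t ht.1, Function.comp]
  exact absurd (hle.trans hsplit) (not_le.2 hlt)

/-- For a finite function, the one-sided estimate along globally defined curves gives the upper
gradient inequality: a curve on `[0, L]` extends to `ℝ` by constants, and reversing it exchanges
the endpoints. -/
lemma isUpperGradient_toReal {X : Type*} [MetricSpace X] [MeasurableSpace X] [BorelSpace X]
    {ρ : X → ℝ≥0∞} (hρ : Measurable ρ) {w : X → ℝ≥0∞} (hw : ∀ x, w x ≠ ⊤)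
    (h : ∀ (L : ℝ) (γ : ℝ → X), 0 ≤ L → LipschitzWith 1 γ →
      w (γ 0) ≤ (∫⁻ t in Icc 0 L, ρ (γ t)) + w (γ L)) :
    IsUpperGradient ρ fun x => (w x).toReal := by
  intro L γ hL hγ
  let η : ℝ → X := fun t => γ (max 0 (min L t))
  have hmem : ∀ t, max 0 (min L t) ∈ Icc 0 L := fun t =>
    ⟨le_max_left _ _, max_le hL (min_le_left _ _)⟩
  have hη : LipschitzWith 1 η := fun s t => by
    have h1 : LipschitzWith 1 fun t : ℝ => max 0 (min L t) :=
      (LipschitzWith.id.const_min L).const_max 0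
    have h2 := hγ (hmem s) (hmem t)
    exact h2.trans (by simpa using h1 s t)
  have hηeq : ∀ t ∈ Icc 0 L, η t = γ t := fun t ht => by
    simp only [η, min_eq_right ht.2, max_eq_right ht.1]
  have hη0 := hηeq 0 ⟨le_rfl, hL⟩
  have hηL := hηeq L ⟨hL, le_rfl⟩
  have hint : ∫⁻ t in Icc 0 L, ρ (η t) = ∫⁻ t in Icc 0 L, ρ (γ t) :=
    setLIntegral_congr_fun measurableSet_Icc fun t ht => by simp only [hηeq t ht]
  have hrev : ∫⁻ t in Icc 0 L, ρ (η (L - t)) = ∫⁻ t in Icc 0 L, ρ (η t) := by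
    have hpre : (fun t : ℝ => L - t) ⁻¹' Icc 0 L = Icc 0 L := by simp
    have := (Measure.measurePreserving_sub_left volume L).setLIntegral_comp_preimage
      measurableSet_Icc (hρ.comp hη.continuous.measurable) (s := Icc 0 L)
    rw [hpre] at this
    exact this
  have h1 := h L η hL hη
  have h2 := h L (fun t => η (L - t)) hL (LipschitzWith.of_dist_le_mul fun s t => by
    simpa only [Real.dist_eq, sub_sub_sub_cancel_left, abs_sub_comm s t]
      using hη.dist_le_mul (L - s) (L - t))
  simp only [sub_zero, sub_self] at h2
  rw [hrev] at h2
  rw [hint, hη0, hηL] at h1 h2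
  set I := ∫⁻ t in Icc 0 L, ρ (γ t)
  by_cases hI : I = ⊤
  · simp [hI]
  refine ENNReal.ofReal_le_of_le_toReal ?_
  have h1' := ENNReal.toReal_mono (ENNReal.add_ne_top.2 ⟨hI, hw _⟩) h1
  have h2' := ENNReal.toReal_mono (ENNReal.add_ne_top.2 ⟨hI, hw _⟩) h2
  rw [ENNReal.toReal_add hI (hw _)] at h1' h2'
  rw [abs_le]
  constructor <;> linarith

/-! ### The limit of the exit costs dominates `|f - c|` -/

/-- If `x` escapes to the complements of arbitrarily large balls at cost less than `M`, then the
escaping curves subconverge to a ray from `x` to infinity of `ρ`-length at most `M`. As `f` tends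
to `c` along that ray, the upper gradient inequality gives `|f x - c| ≤ M`. -/
lemma ofReal_abs_sub_le_of_frequently_exitCost_lt {X : Type*} [MetricSpace X] [ProperSpace X]
    [MeasurableSpace X] [BorelSpace X] {ρ : X → ℝ≥0∞} (hρ : LowerSemicontinuous ρ) {x₀ : X}
    (hpos : ∀ R : ℝ, ∃ b : ℝ≥0∞, b ≠ 0 ∧ ∀ y ∈ ball x₀ R, b ≤ ρ y)
    {f : X → ℝ} (hf : IsUpperGradient ρ f) {c : ℝ}
    (hray : ∀ σ : ℝ → X, LipschitzWith 1 σ → TendsToInfinity σ →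
      ∫⁻ t in Ici 0, ρ (σ t) < ⊤ → Tendsto (fun t => f (σ t)) atTop (𝓝 c))
    {x : X} {M : ℝ≥0∞} (hM : M < ⊤) (hx : ∃ᶠ n : ℕ in atTop, exitCost ρ x₀ n x < M) :
    ENNReal.ofReal |f x - c| ≤ M := by
  obtain ⟨k, hk, hkM⟩ := extraction_of_frequently_atTop hx
  choose L γ hL hγ h0 hout hcost using fun n => exitCost_lt_iff.1 (hkM n)
  obtain ⟨φ, σ, hφ, hσ, hlim⟩ := exists_subseq_curve x 1 γ hγ fun n => by simp [h0]
  have hσ0 : σ 0 = x := tendsto_nhds_unique (hlim 0) (by simp [h0])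
  -- reaching the complement of a ball of radius `k n` takes time at least `k n - dist x x₀`
  have hLn : ∀ n : ℕ, (n : ℝ) - dist x x₀ ≤ L (φ n) := by
    intro n
    have h1 : (k (φ n) : ℝ) ≤ dist (γ (φ n) (L (φ n))) x₀ := not_lt.1 (hout (φ n))
    have h2 := (hγ (φ n)).dist_le_mul (L (φ n)) 0
    rw [h0] at h2
    simp only [NNReal.coe_one, one_mul, Real.dist_eq, sub_zero, abs_of_nonneg (hL (φ n))] at h2
    have h3 : (n : ℝ) ≤ k (φ n) := by exact_mod_cast (hk.comp hφ).id_le n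
    linarith [dist_triangle (γ (φ n) (L (φ n))) x x₀]
  have hint : ∫⁻ t in Ici 0, ρ (σ t) ≤ M := by
    refine lintegral_curve_le hρ (fun n => (hγ (φ n)).continuous) hlim
      (T := fun n => Icc 0 (L (φ n))) measurableSet_Ici (fun _ => measurableSet_Icc) ?_
      fun n => (hcost _).le
    intro t ht
    filter_upwards [tendsto_natCast_atTop_atTop.eventually_ge_atTop (t + dist x x₀)] with n hn
    exact ⟨ht, by linarith [hLn n]⟩
  have hinf : TendsToInfinity σ := by
    refine tendsToInfinity_of_lintegral_lt_top hρ.measurable hσ (fun R => ?_) (hint.trans_lt hM)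
    obtain ⟨b, hb0, hb⟩ := hpos (R + dist (σ 0) x₀)
    refine ⟨b, hb0, fun y hy => hb y ?_⟩
    rw [mem_ball] at hy ⊢
    linarith [dist_triangle y (σ 0) x₀]
  have hfc := hray σ hσ hinf (hint.trans_lt hM)
  have hlim' : Tendsto (fun t => ENNReal.ofReal |f (σ t) - f (σ 0)|) atTop
      (𝓝 (ENNReal.ofReal |c - f (σ 0)|)) :=
    ENNReal.tendsto_ofReal ((hfc.sub_const _).abs)
  rw [abs_sub_comm, ← hσ0]
  refine le_of_tendsto hlim' ?_
  filter_upwards [eventually_ge_atTop 0] with t ht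
  exact (hf t σ ht hσ.lipschitzOnWith).trans
    ((lintegral_mono_set Icc_subset_Ici_self).trans hint)

/-! ### The density -/

/-- From `g ∈ L^p` and a family `Γ` of modulus zero one gets a single lower semicontinuous
`ρ ∈ L^p` that dominates `g`, is bounded below by a positive constant on every ball, and has
infinite integral along every ray of `Γ`. Here `ρ ^ p` is a Vitali–Carathéodory majorant of
`g ^ p + ∑ₙ ((n hₙ) ^ p + aₙ 1_{B(x₀, n)})`, where `hₙ` is admissible for `Γ` and has so small an
`L^p` norm that the sum is integrable; then `ρ ≥ n hₙ` gives `∫ ρ ≥ n` along `Γ`. -/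
lemma exists_density {X : Type*} [MetricSpace X] [MeasurableSpace X] [BorelSpace X]
    [ProperSpace X] (μ : Measure X) (x₀ : X)
    (hball : ∀ r : ℝ, μ (ball x₀ r) < ⊤) {p : ℝ} (hp : 0 < p) {g : X → ℝ≥0∞}
    (hg : Measurable g) (hgp : ∫⁻ x, g x ^ p ∂μ < ⊤) {Γ : Set (ℝ → X)}
    (hΓ : RayModulus p μ Γ = 0) :
    ∃ ρ : X → ℝ≥0∞, LowerSemicontinuous ρ ∧ g ≤ ρ ∧
      (∀ R : ℝ, ∃ b : ℝ≥0∞, b ≠ 0 ∧ ∀ y ∈ ball x₀ R, b ≤ ρ y) ∧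
      (∀ γ ∈ Γ, ∫⁻ t in Ici (0 : ℝ), ρ (γ t) = ⊤) ∧ ∫⁻ x, ρ x ^ p ∂μ < ⊤ := by
  have : IsLocallyFiniteMeasure μ := ⟨fun x => ⟨ball x₀ (dist x x₀ + 1),
    isOpen_ball.mem_nhds (by simp), hball _⟩⟩
  obtain ⟨δ, hδ, hδsum⟩ := ENNReal.exists_pos_sum_of_countable' (one_ne_zero (α := ℝ≥0∞)) ℕ
  have hh : ∀ n : ℕ, ∃ h : X → ℝ≥0∞, Measurable h ∧
      (∀ γ ∈ Γ, 1 ≤ ∫⁻ t in Ici (0 : ℝ), h (γ t)) ∧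
      ∫⁻ x, ((n : ℝ≥0∞) * h x) ^ p ∂μ ≤ δ n := by
    intro n
    obtain ⟨ε, hε, hεn⟩ := ENNReal.exists_nnreal_pos_mul_lt
      (ENNReal.rpow_ne_top_of_nonneg hp.le (ENNReal.natCast_ne_top n)) (hδ n).ne'
    have hlt : RayModulus p μ Γ < ε := by rw [hΓ]; exact_mod_cast hε
    simp only [RayModulus, iInf_lt_iff, exists_prop] at hlt
    obtain ⟨h, hm, hadm, hlt⟩ := hlt
    refine ⟨h, hm, hadm, ?_⟩
    simp_rw [ENNReal.mul_rpow_of_nonneg _ _ hp.le]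
    rw [lintegral_const_mul _ (hm.pow_const p), mul_comm]
    exact (mul_le_mul_left hlt.le _).trans hεn.le
  choose h hhm hadm hhint using hh
  have ha : ∀ n : ℕ, ∃ a : ℝ≥0, 0 < a ∧ (a : ℝ≥0∞) * μ (ball x₀ n) < δ n := fun n =>
    ENNReal.exists_nnreal_pos_mul_lt (hball n).ne (hδ n).ne'
  choose a ha0 haδ using ha
  let F : X → ℝ≥0∞ := fun x => g x ^ p + ∑' n : ℕ,
    (((n : ℝ≥0∞) * h n x) ^ p + (ball x₀ n).indicator (fun _ => (a n : ℝ≥0∞)) x)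
  have hterm : ∀ n : ℕ, Measurable fun x => ((n : ℝ≥0∞) * h n x) ^ p := fun n =>
    ((hhm n).const_mul _).pow_const p
  have hterm' : ∀ n : ℕ, Measurable fun x => ((n : ℝ≥0∞) * h n x) ^ p +
      (ball x₀ n).indicator (fun _ => (a n : ℝ≥0∞)) x := fun n =>
    (hterm n).add (measurable_const.indicator measurableSet_ball)
  have hFm : Measurable F := (hg.pow_const p).add (Measurable.tsum hterm')
  have hF : ∫⁻ x, F x ∂μ < ⊤ := by
    rw [lintegral_add_left (hg.pow_const p), lintegral_tsum fun n => (hterm' n).aemeasurable]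
    refine ENNReal.add_lt_top.2 ⟨hgp, ?_⟩
    calc ∑' n : ℕ, ∫⁻ x, (((n : ℝ≥0∞) * h n x) ^ p +
          (ball x₀ n).indicator (fun _ => (a n : ℝ≥0∞)) x) ∂μ ≤ ∑' n, (δ n + δ n) := by
          refine ENNReal.tsum_le_tsum fun n => ?_
          rw [lintegral_add_left (hterm n), lintegral_indicator_const measurableSet_ball]
          exact add_le_add (hhint n) (haδ n).le
      _ = (∑' n, δ n) + ∑' n, δ n := ENNReal.tsum_add
      _ < ⊤ := ENNReal.add_lt_top.2 ⟨hδsum.trans ENNReal.one_lt_top, hδsum.trans ENNReal.one_lt_top⟩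
  obtain ⟨G, hFG, hGl, hG⟩ := exists_le_lowerSemicontinuous_lintegral_ge μ F hFm
    (one_ne_zero (α := ℝ≥0∞))
  have hroot : ∀ {u : ℝ≥0∞} {x : X}, u ^ p ≤ F x → u ≤ G x ^ p⁻¹ := fun {u x} hu => by
    rw [ENNReal.le_rpow_inv_iff hp]
    exact hu.trans (hFG x)
  have hhρ : ∀ (n : ℕ) x, (n : ℝ≥0∞) * h n x ≤ G x ^ p⁻¹ := fun n x =>
    hroot ((le_self_add.trans (ENNReal.le_tsum (f := fun n : ℕ => ((n : ℝ≥0∞) * h n x) ^ p +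
      (ball x₀ n).indicator (fun _ => (a n : ℝ≥0∞)) x) n)).trans le_add_self)
  refine ⟨fun x => G x ^ p⁻¹, ?_, fun x => hroot le_self_add, fun R => ?_, fun γ hγ => ?_, ?_⟩
  · exact (ENNReal.continuous_rpow_const (y := p⁻¹)).comp_lowerSemicontinuous hGl
      (ENNReal.monotone_rpow_of_nonneg (inv_nonneg.2 hp.le))
  · obtain ⟨n, hn⟩ := exists_nat_ge R
    refine ⟨(a n : ℝ≥0∞) ^ p⁻¹, ?_, fun y hy => ?_⟩
    · exact (ENNReal.rpow_pos (by exact_mod_cast ha0 n) ENNReal.coe_ne_top).ne'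
    · refine ENNReal.rpow_le_rpow (le_trans ?_ (hFG y)) (inv_nonneg.2 hp.le)
      have : (a n : ℝ≥0∞) = (ball x₀ n).indicator (fun _ => (a n : ℝ≥0∞)) y := by
        rw [indicator_of_mem (ball_subset_ball hn hy)]
      rw [this]
      exact (le_add_self.trans (ENNReal.le_tsum (f := fun n : ℕ => ((n : ℝ≥0∞) * h n y) ^ p +
        (ball x₀ n).indicator (fun _ => (a n : ℝ≥0∞)) y) n)).trans le_add_self
  · refine ENNReal.eq_top_of_forall_nnreal_le fun r => ?_
    obtain ⟨n, hn⟩ := exists_nat_ge r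
    calc (r : ℝ≥0∞) ≤ n * 1 := by rw [mul_one]; exact_mod_cast hn
      _ ≤ n * ∫⁻ t in Ici (0 : ℝ), h n (γ t) := mul_le_mul_right (hadm n γ hγ) _
      _ = ∫⁻ t in Ici (0 : ℝ), n * h n (γ t) :=
        (lintegral_const_mul' _ _ (ENNReal.natCast_ne_top n)).symm
      _ ≤ _ := lintegral_mono fun t => hhρ n (γ t)
  · simp_rw [ENNReal.rpow_inv_rpow hp.ne']
    exact hG.trans_lt (ENNReal.add_lt_top.2 ⟨hF, ENNReal.one_lt_top⟩)

/-! ### Proof of the integrability -/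

/-- under the standing assumptions, uniformly locally `p`-controlled geometry and
a global `(p,p)`-Sobolev inequality, if `f ∈ D^{1,p}(X)` and there is `c ∈ ℝ` such that the
family of `1`-Lipschitz rays tending to `∞` along which `f` does not converge to `c` has zero
`p`-modulus, then `∫ |f - c|ᵖ dμ < ∞`, i.e. `f - c ∈ N^{1,p}(X)`. -/
theorem statement6 {X : Type*} [MetricSpace X] [MeasurableSpace X] [BorelSpace X]
    [ProperSpace X] [ConnectedSpace X]
    (μ : Measure X) (hXinf : μ Set.univ = ⊤)
    (hball : ∀ (x : X) (r : ℝ), 0 < r → 0 < μ (ball x r) ∧ μ (ball x r) < ⊤)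
    (p : ℝ) (hp : 1 ≤ p)
    (hgeom : UniformlyLocallyControlledGeometry p μ)
    (hsob : GlobalSobolevInequality p μ)
    (f : X → ℝ) (hfmeas : Measurable f)
    (hfD : ∃ g : X → ℝ≥0∞, Measurable g ∧ IsUpperGradient g f ∧ (∫⁻ x, g x ^ p ∂μ) < ⊤)
    (c : ℝ)
    (hc : RayModulus p μ {γ : ℝ → X | LipschitzOnWith 1 γ (Set.Ici 0) ∧ TendsToInfinity γ ∧
        ¬ Tendsto (fun t : ℝ => f (γ t)) atTop (𝓝 c)} = 0) :
    (∫⁻ x, ENNReal.ofReal |f x - c| ^ p ∂μ) < ⊤ := by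
  obtain ⟨g, hgm, hgf, hgp⟩ := hfD
  obtain ⟨Cs, -, hCs⟩ := hsob
  obtain ⟨x₀⟩ := (inferInstance : Nonempty X)
  have hp0 : 0 < p := zero_lt_one.trans_le hp
  have hμ : ∀ r : ℝ, μ (ball x₀ r) < ⊤ := fun r => by
    rcases lt_or_ge 0 r with hr | hr
    · exact (hball x₀ r hr).2
    · simp [ball_eq_empty.2 hr]
  obtain ⟨ρ, hρ, hgρ, hpos, hΓ, hρp⟩ := exists_density μ x₀ hμ hp0 hgm hgp hc
  have hρf : IsUpperGradient ρ f := fun L γ hL hγ =>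
    (hgf L γ hL hγ).trans (lintegral_mono fun t => hgρ _)
  have hray : ∀ σ : ℝ → X, LipschitzWith 1 σ → TendsToInfinity σ →
      ∫⁻ t in Ici 0, ρ (σ t) < ⊤ → Tendsto (fun t => f (σ t)) atTop (𝓝 c) := by
    intro σ hσ hinf hint
    by_contra hcon
    exact hint.ne (hΓ σ ⟨hσ.lipschitzOnWith, hinf, hcon⟩)
  -- compactly supported functions with upper gradient `ρ`, increasing to `|f - c|`
  let w : ℕ → X → ℝ≥0∞ := fun n x =>
    min (ENNReal.ofReal |f x - c|) (min (exitCost ρ x₀ n x) n)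
  have hwtop : ∀ n x, w n x ≠ ⊤ := fun n x =>
    (((min_le_right _ _).trans (min_le_right _ _)).trans_lt (ENNReal.natCast_lt_top n)).ne
  have hwm : ∀ n, Measurable (w n) := fun n => by
    obtain ⟨b, hb0, hb⟩ := hpos n
    exact (hfmeas.sub_const c).abs.ennreal_ofReal.min
      ((lowerSemicontinuous_exitCost hρ hb0 hb).measurable.min measurable_const)
  have hwout : ∀ n : ℕ, ∀ x ∉ ball x₀ n, w n x = 0 := fun n x hx => by
    simp [w, exitCost_eq_zero hx]
  have hwgrad : ∀ n, IsUpperGradient ρ fun x => (w n x).toReal := by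
    refine fun n => isUpperGradient_toReal hρ.measurable (hwtop n) fun L γ hL hγ => ?_
    simp only [w]
    rw [← min_add_add_left, ← min_add_add_left]
    refine min_le_min ?_ (min_le_min (exitCost_le_lintegral_add hρ.measurable x₀ n hL hγ)
      le_add_self)
    calc ENNReal.ofReal |f (γ 0) - c|
        ≤ ENNReal.ofReal (|f (γ L) - f (γ 0)| + |f (γ L) - c|) := by
          refine ENNReal.ofReal_le_ofReal ?_
          rw [abs_sub_comm (f (γ L)) (f (γ 0))]
          exact abs_sub_le _ _ _
      _ ≤ _ := ENNReal.ofReal_add_le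
      _ ≤ _ := add_le_add_left (hρf L γ hL hγ.lipschitzOnWith) _
  have hwabs : ∀ n x, ENNReal.ofReal |(w n x).toReal| = w n x := fun n x => by
    rw [abs_of_nonneg ENNReal.toReal_nonneg, ENNReal.ofReal_toReal (hwtop n x)]
  -- the Sobolev inequality bounds `‖w n‖_p` independently of `n`
  have hwint : ∀ n, ∫⁻ x, w n x ^ p ∂μ ≤ ENNReal.ofReal Cs * ∫⁻ x, ρ x ^ p ∂μ := by
    intro n
    have := hCs (fun x => (w n x).toReal) ρ (hwm n).ennreal_toReal ?_ ?_ hρ.measurable (hwgrad n)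
    · simpa only [hwabs] using this
    · refine HasCompactSupport.intro (isCompact_closedBall x₀ n) fun x hx => ?_
      simp [hwout n x fun h => hx (ball_subset_closedBall h)]
    · simp only [hwabs]
      calc ∫⁻ x, w n x ^ p ∂μ ≤ ∫⁻ x, (ball x₀ n).indicator (fun _ => (n : ℝ≥0∞) ^ p) x ∂μ := by
            refine lintegral_mono fun x => ?_
            by_cases hx : x ∈ ball x₀ (n : ℝ)
            · rw [indicator_of_mem hx]
              exact ENNReal.rpow_le_rpow ((min_le_right _ _).trans (min_le_right _ _)) hp0.le
            · simp [hwout n x hx, hp0]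
        _ = (n : ℝ≥0∞) ^ p * μ (ball x₀ n) := lintegral_indicator_const measurableSet_ball _
        _ < ⊤ := ENNReal.mul_lt_top
          (ENNReal.rpow_lt_top_of_nonneg hp0.le (ENNReal.natCast_ne_top n)) (hμ n)
  have hwlim : ∀ x, ENNReal.ofReal |f x - c| ^ p ≤ liminf (fun n => w n x ^ p) atTop := by
    intro x
    refine le_of_forall_lt_imp_le_of_dense fun m hm => ?_
    refine le_liminf_of_le (by isBoundedDefault) ?_
    have hm' : m ^ p⁻¹ < ENNReal.ofReal |f x - c| := by
      rwa [ENNReal.rpow_inv_lt_iff hp0]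
    obtain ⟨M, hmM, hM⟩ := exists_between hm'
    have hcost : ∀ᶠ n : ℕ in atTop, M ≤ exitCost ρ x₀ n x := by
      by_contra hcon
      refine absurd (ofReal_abs_sub_le_of_frequently_exitCost_lt hρ hpos hρf hray hM.lt_top
        (x := x) ?_) (not_le.2 hM)
      simpa only [not_eventually, not_le] using hcon
    obtain ⟨N, hN⟩ := ENNReal.exists_nat_gt hM.ne_top
    filter_upwards [hcost, eventually_ge_atTop N] with n h1 h2
    have h3 : M ≤ w n x := le_min hM.le (le_min h1 (hN.le.trans (by exact_mod_cast h2)))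
    rw [← ENNReal.rpow_inv_le_iff hp0]
    exact hmM.le.trans h3
  calc ∫⁻ x, ENNReal.ofReal |f x - c| ^ p ∂μ ≤ ∫⁻ x, liminf (fun n => w n x ^ p) atTop ∂μ :=
        lintegral_mono hwlim
    _ ≤ liminf (fun n => ∫⁻ x, w n x ^ p ∂μ) atTop :=
        lintegral_liminf_le fun n => (hwm n).pow_const p
    _ ≤ ENNReal.ofReal Cs * ∫⁻ x, ρ x ^ p ∂μ := by
        refine liminf_le_of_le (by isBoundedDefault) fun b hb => ?_
        obtain ⟨n, hn⟩ := hb.exists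
        exact hn.trans (hwint n)
    _ < ⊤ := ENNReal.mul_lt_top ENNReal.ofReal_lt_top hρp
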